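/- arXiv:1707.04830 — 6 statements merged into one kernel-verified Lean document; each statement's English description precedes it below -/
import Mathlib

section
/- For any a, b ∈ [0,1/2) there exists c ∈ ℝ such that U_b ⊆ h(L_a), where h is the homothety of ℝ² with center (0,c) and ratio λ(a,b). -/
/-- The 7-gon `L_a` with vertices (0, 2a/(1+a)), (±1,1), (±2,2), (±1,3). -/
noncomputable def L (a : ℝ) : Set (ℝ × ℝ) :=
  convexHull ℝ {((0 : ℝ), 2 * a / (1 + a)), (1, 1), (-1, 1), (2, 2), (-2, 2), (1, 3), (-1, 3)}

/-- The polygon `U_a` from Definition 2.1. -/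
noncomputable def U (a : ℝ) : Set (ℝ × ℝ) :=
  if a < 1 / 2 then
    convexHull ℝ {((a : ℝ), a), (-a, a), (2 + a, 2 - a), (-(2 + a), 2 - a),
      (3 - a, 3 - a), (-(3 - a), 3 - a), (3 - 2 * a, 3), (-(3 - 2 * a), 3),
      (a, 4 - a), (-a, 4 - a)}
  else
    convexHull ℝ {((a : ℝ), a), (-a, a), (3 - 2 * a, 1), (-(3 - 2 * a), 1),
      (3 - a, 1 + a), (-(3 - a), 1 + a), (3 - a, 3 - a), (-(3 - a), 3 - a),
      (3 - 2 * a, 3), (-(3 - 2 * a), 3), (a, 4 - a), (-a, 4 - a)}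

/-- The ratio λ(a,b) from Lemma 2.4. -/
noncomputable def lam (a b : ℝ) : ℝ :=
  if b ≤ 3 * a / (2 * (1 + 2 * a)) then 1 + (1 - b) * (1 + 2 * a) / (2 + a) else 3 / 2

/-! Put `μ = 1 + (1 - b)(1 + 2a)/(2 + a)`, so that `λ(a,b) = max (3/2) μ`. For a ratio `l`,
translate `l • L a` vertically by `6 - 2b - 4l`: its upper edges, the images of `|x| + y = 4`, then
lie on `|x| + y = 6 - 2b`, the lines through the upper slanted edges of `U b`. The remaining
conditions for containing `U b` are decided at three of its vertices:

* `(2 + b, 2 - b)` lies above the image of `y = |x|` iff `3/2 ≤ l`;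
* `(b, b)` lies above the images of the lowest edges of `L a` iff `μ ≤ l`;
* `(b, 4 - b)` lies below the image of `y = 3` iff `l ≤ 2 - b`.
-/

section Homothety

variable {𝕜 E : Type*} [Field 𝕜] [AddCommGroup E] [Module 𝕜 E] {r : 𝕜}

theorem homothety_inv_one_sub_smul_apply (hr : r ≠ 1) (v p : E) :
    AffineMap.homothety ((1 - r)⁻¹ • v) r p = r • p + v := by
  calc AffineMap.homothety ((1 - r)⁻¹ • v) r p
      = r • p + (1 - r) • (1 - r)⁻¹ • v := by
        rw [AffineMap.homothety_apply, vsub_eq_sub, vadd_eq_add]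
        module
    _ = r • p + v := by rw [smul_inv_smul₀ (sub_ne_zero.2 hr.symm)]

theorem mem_homothety_image_iff (hr₀ : r ≠ 0) (hr₁ : r ≠ 1) {v q : E} {S : Set E} :
    q ∈ AffineMap.homothety ((1 - r)⁻¹ • v) r '' S ↔ r⁻¹ • (q - v) ∈ S := by
  constructor
  · rintro ⟨p, hp, rfl⟩
    rwa [homothety_inv_one_sub_smul_apply hr₁, add_sub_cancel_right, inv_smul_smul₀ hr₀]
  · intro hq
    refine ⟨_, hq, ?_⟩
    rw [homothety_inv_one_sub_smul_apply hr₁, smul_inv_smul₀ hr₀, sub_add_cancel]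

end Homothety

theorem prodMk_mem_of_mem_Icc {𝕜 E : Type*} [Field 𝕜] [LinearOrder 𝕜] [IsStrictOrderedRing 𝕜]
    [AddCommGroup E] [Module 𝕜 E] {S : Set (E × 𝕜)} (hS : Convex 𝕜 S) {x : E} {y₀ y₁ y : 𝕜}
    (h₀ : (x, y₀) ∈ S) (h₁ : (x, y₁) ∈ S) (hy : y ∈ Set.Icc y₀ y₁) : (x, y) ∈ S := by
  apply hS.segment_subset h₀ h₁
  rw [← Prod.image_mk_segment_right, segment_eq_Icc (hy.1.trans hy.2)]
  exact Set.mem_image_of_mem _ hy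

theorem neg_fst_mem_convexHull {𝕜 E F : Type*} [Ring 𝕜] [PartialOrder 𝕜] [AddCommGroup E]
    [Module 𝕜 E] [AddCommMonoid F] [Module 𝕜 F] {V : Set (E × F)}
    (hV : ∀ p ∈ V, (-p.1, p.2) ∈ V) {p : E × F} (hp : p ∈ convexHull 𝕜 V) :
    (-p.1, p.2) ∈ convexHull 𝕜 V := by
  let reflection : E × F →ₗ[𝕜] E × F := (-LinearMap.id).prodMap LinearMap.id
  have hull_subset : convexHull 𝕜 V ⊆ reflection ⁻¹' convexHull 𝕜 V :=
    convexHull_min (fun q hq ↦ subset_convexHull 𝕜 V (hV q hq))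
      ((convex_convexHull 𝕜 V).linear_preimage reflection)
  exact hull_subset hp

theorem neg_fst_mem_L {a x y : ℝ} (h : (x, y) ∈ L a) : (-x, y) ∈ L a := by
  refine neg_fst_mem_convexHull (p := (x, y)) ?_ h
  rintro p (rfl | rfl | rfl | rfl | rfl | rfl | rfl) <;> simp

theorem mem_L_of_nonneg {a x y : ℝ} (ha : -1 < a) (hx : 0 ≤ x) (hxy : x ≤ y) (hxy' : x + y ≤ 4)
    (hy : y ≤ 3) (hlow : 2 * a + (1 - a) * x ≤ (1 + a) * y) : (x, y) ∈ L a := by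
  have hL : Convex ℝ (L a) := convex_convexHull ℝ _
  have bottom : (0, 2 * a / (1 + a)) ∈ L a := subset_convexHull ℝ _ (by simp)
  have lower : (1, 1) ∈ L a := subset_convexHull ℝ _ (by simp)
  have middle : (2, 2) ∈ L a := subset_convexHull ℝ _ (by simp)
  have upper : (1, 3) ∈ L a := subset_convexHull ℝ _ (by simp)
  rcases le_total x 1 with hx₁ | hx₁
  · have low_edge : (x, (1 - x) * (2 * a / (1 + a)) + x) ∈ L a := by
      simpa using hL bottom lower (sub_nonneg.2 hx₁) hx (sub_add_cancel 1 x)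
    have top_edge : (x, 3) ∈ L a := by
      convert hL (neg_fst_mem_L upper) upper (a := (1 - x) / 2) (b := (1 + x) / 2)
        (by linarith) (by linarith) (by ring) using 1
      ext <;> simp <;> ring
    refine prodMk_mem_of_mem_Icc hL low_edge top_edge ⟨?_, hy⟩
    have ha' : 0 < 1 + a := by linarith
    field_simp
    linarith
  · have lower_edge : (x, x) ∈ L a := by
      convert hL lower middle (a := 2 - x) (b := x - 1)
        (by linarith) (by linarith) (by ring) using 1
      ext <;> simp <;> ring
    have upper_edge : (x, 4 - x) ∈ L a := by
      convert hL upper middle (a := 2 - x) (b := x - 1)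
        (by linarith) (by linarith) (by ring) using 1
      ext <;> simp <;> ring
    exact prodMk_mem_of_mem_Icc hL lower_edge upper_edge ⟨hxy, by linarith⟩

theorem mem_and_neg_fst_mem_homothety_image_L {a l s x y : ℝ} (ha : -1 < a) (hl₀ : 0 < l)
    (hl₁ : l ≠ 1) (hx : 0 ≤ x) (hxy : x ≤ y - s) (hxy' : x + (y - s) ≤ 4 * l)
    (hy : y - s ≤ 3 * l) (hlow : 2 * a * l + (1 - a) * x ≤ (1 + a) * (y - s)) :
    (x, y) ∈ AffineMap.homothety ((0 : ℝ), (1 - l)⁻¹ * s) l '' L a ∧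
      (-x, y) ∈ AffineMap.homothety ((0 : ℝ), (1 - l)⁻¹ * s) l '' L a := by
  have rescaled : (x / l, (y - s) / l) ∈ L a := by
    apply mem_L_of_nonneg ha
    · positivity
    · gcongr
    · field_simp
      linarith
    · field_simp
      linarith
    · field_simp
      linarith
  have center_eq : ((0 : ℝ), (1 - l)⁻¹ * s) = (1 - l)⁻¹ • ((0 : ℝ), s) := by simp
  rw [center_eq, mem_homothety_image_iff hl₀.ne' hl₁, mem_homothety_image_iff hl₀.ne' hl₁]
  constructor
  · simpa [div_eq_inv_mul] using rescaled
  · simpa [div_eq_inv_mul] using neg_fst_mem_L rescaled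

theorem lam_eq_max {a : ℝ} (ha : -1 / 2 < a) (b : ℝ) :
    lam a b = max (3 / 2) (1 + (1 - b) * (1 + 2 * a) / (2 + a)) := by
  have threshold : b ≤ 3 * a / (2 * (1 + 2 * a)) ↔
      3 / 2 ≤ 1 + (1 - b) * (1 + 2 * a) / (2 + a) := by
    rw [le_div_iff₀ (by linarith), ← sub_le_iff_le_add', le_div_iff₀ (by linarith)]
    constructor <;> intro h <;> linarith
  simp only [lam, max_def, threshold]

theorem lam_le_two_sub {a b : ℝ} (ha₀ : -1 / 2 < a) (ha₁ : a ≤ 1) (hb : b ≤ 1 / 2) :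
    lam a b ≤ 2 - b := by
  have slope_le : (1 + 2 * a) / (2 + a) ≤ 1 := by
    rw [div_le_one (by linarith)]
    linarith
  rw [lam_eq_max ha₀, mul_div_assoc]
  refine max_le (by linarith) ?_
  linarith [mul_le_of_le_one_right (show 0 ≤ 1 - b by linarith) slope_le]

theorem U_subset_homothety_image_L {a b l : ℝ} (ha : 0 ≤ a) (hb : b ∈ Set.Ico (0 : ℝ) (1 / 2))
    (hl : lam a b ≤ l) (hl' : l ≤ 2 - b) :
    U b ⊆ AffineMap.homothety ((0 : ℝ), (1 - l)⁻¹ * (6 - 2 * b - 4 * l)) l '' L a := by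
  obtain ⟨hb₀, hb₁⟩ := hb
  obtain ⟨hside, hbottom⟩ : 3 / 2 ≤ l ∧ 1 + (1 - b) * (1 + 2 * a) / (2 + a) ≤ l := by
    rwa [lam_eq_max (by linarith), max_le_iff] at hl
  have hbottom' : (1 - b) * (1 + 2 * a) ≤ (l - 1) * (2 + a) :=
    (div_le_iff₀ (by linarith)).1 (by linarith)
  have hal : a * (3 / 2) ≤ a * l := by gcongr
  have hab : 0 ≤ a * b := mul_nonneg ha hb₀
  let T := AffineMap.homothety ((0 : ℝ), (1 - l)⁻¹ * (6 - 2 * b - 4 * l)) l '' L a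
  have hT : Convex ℝ T := (convex_convexHull ℝ _).affine_image _
  have mem_T {x y : ℝ} := mem_and_neg_fst_mem_homothety_image_L (s := 6 - 2 * b - 4 * l) (x := x)
    (y := y) (show -1 < a by linarith) (show 0 < l by linarith) (show l ≠ 1 by linarith)
  have bottom : (b, b) ∈ T ∧ (-b, b) ∈ T := by apply mem_T <;> linarith
  have lower_side : (2 + b, 2 - b) ∈ T ∧ (-(2 + b), 2 - b) ∈ T := by apply mem_T <;> linarith
  have upper_side : (3 - b, 3 - b) ∈ T ∧ (-(3 - b), 3 - b) ∈ T := by apply mem_T <;> linarith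
  have shoulder : (3 - 2 * b, 3) ∈ T ∧ (-(3 - 2 * b), 3) ∈ T := by apply mem_T <;> linarith
  have top : (b, 4 - b) ∈ T ∧ (-b, 4 - b) ∈ T := by apply mem_T <;> linarith
  rw [U, if_pos hb₁]
  refine convexHull_min ?_ hT
  rintro p (rfl | rfl | rfl | rfl | rfl | rfl | rfl | rfl | rfl | rfl)
  exacts [bottom.1, bottom.2, lower_side.1, lower_side.2, upper_side.1, upper_side.2,
    shoulder.1, shoulder.2, top.1, top.2]

theorem stmt_4_general (a b : ℝ) (ha : a ∈ Set.Icc (0 : ℝ) 1)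
    (hb : b ∈ Set.Ico (0 : ℝ) (1 / 2)) :
    ∃ c : ℝ, U b ⊆ AffineMap.homothety ((0 : ℝ), c) (lam a b) '' L a := by
  exact ⟨_, U_subset_homothety_image_L ha.1 hb le_rfl
    (lam_le_two_sub (by linarith [ha.1]) ha.2 hb.2.le)⟩

theorem stmt_4 (a b : ℝ) (ha : a ∈ Set.Ico (0 : ℝ) (1 / 2)) (hb : b ∈ Set.Ico (0 : ℝ) (1 / 2)) :
    ∃ c : ℝ, U b ⊆ AffineMap.homothety ((0 : ℝ), c) (lam a b) '' L a := by
  exact stmt_4_general a b ⟨ha.1, by linarith [ha.2]⟩ hb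
end

section
/- Let a, b ∈ [0,1/2) and let c ∈ ℝ satisfy max{2a/(1+a), 2b/(1+b)} < c < 2. If λ ≥ 1 + max{ 2a(1−b)/(c + ca − 2a), 2b/c, 2(1−b)/(4−c) }, then U_b ⊆ h(L_a), where h is the homothety of ℝ² with center (0,c) and ratio λ. -/
/-!
Both polygons are symmetric about the `y`-axis, so each is cut out by inequalities
`α * |x| + β * y ≤ γ` with `0 ≤ α`. A homothety with centre `(0, c)` and ratio `l` only changes such
an inequality into `α * |x| + β * (y - c) ≤ l * (γ - β * c)`. Four inequalities suffice to describe
`L a`, and the largest value of each left-hand side on `U b` is attained at a vertex. The three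
terms in the bound for the ratio come, in this order, from the vertices `(±b, b)`, from the vertices
`(±(2 + b), 2 - b)`, and from the edges on `|x| + y = 6 - 2 * b`.
-/

section Convex

variable {𝕜 : Type*} [Field 𝕜] [LinearOrder 𝕜] [IsStrictOrderedRing 𝕜]

lemma mk_mem_of_convex_of_abs_le {F : Type*} [AddCommGroup F] [Module 𝕜 F] {S : Set (𝕜 × F)}
    (hS : Convex 𝕜 S) {x w : 𝕜} {y : F} (hneg : (-w, y) ∈ S) (hpos : (w, y) ∈ S)
    (hx : |x| ≤ w) : (x, y) ∈ S := by
  have hslice : Convex 𝕜 ((AffineMap.id 𝕜 𝕜).prod (AffineMap.const 𝕜 𝕜 y) ⁻¹' S) :=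
    hS.affine_preimage _
  exact hslice.ordConnected.out hneg hpos (abs_le.mp hx)

lemma mk_mem_of_convex_of_mem_trapezoid {S : Set (𝕜 × 𝕜)} (hS : Convex 𝕜 S) {w₀ w₁ y₀ y₁ : 𝕜}
    (hneg₀ : (-w₀, y₀) ∈ S) (hpos₀ : (w₀, y₀) ∈ S) (hneg₁ : (-w₁, y₁) ∈ S) (hpos₁ : (w₁, y₁) ∈ S)
    {x y : 𝕜} (hlt : y₀ < y₁) (hy₀ : y₀ ≤ y) (hy₁ : y ≤ y₁)
    (hx : (y₁ - y₀) * |x| ≤ (y₁ - y) * w₀ + (y - y₀) * w₁) : (x, y) ∈ S := by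
  have hd : 0 < y₁ - y₀ := sub_pos.mpr hlt
  set s := (y₁ - y) / (y₁ - y₀) with hs
  set t := (y - y₀) / (y₁ - y₀) with ht
  have hs₀ : 0 ≤ s := div_nonneg (sub_nonneg.mpr hy₁) hd.le
  have ht₀ : 0 ≤ t := div_nonneg (sub_nonneg.mpr hy₀) hd.le
  have hst : s + t = 1 := by rw [hs, ht]; field_simp; ring
  have hy : s * y₀ + t * y₁ = y := by rw [hs, ht]; field_simp; ring
  have hw : |x| ≤ s * w₀ + t * w₁ := by
    rw [hs, ht, div_mul_eq_mul_div, div_mul_eq_mul_div, ← add_div, le_div_iff₀' hd]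
    exact hx
  have hneg := hS hneg₀ hneg₁ hs₀ ht₀ hst
  have hpos := hS hpos₀ hpos₁ hs₀ ht₀ hst
  simp only [Prod.smul_mk, Prod.mk_add_mk, smul_eq_mul, mul_neg, ← neg_add, hy] at hneg hpos
  exact mk_mem_of_convex_of_abs_le hS hneg hpos hw

lemma convex_setOf_mul_abs_fst_add_mul_snd_le {α : 𝕜} (hα : 0 ≤ α) (β γ : 𝕜) :
    Convex 𝕜 {p : 𝕜 × 𝕜 | α * |p.1| + β * p.2 ≤ γ} := by
  rintro p hp q hq s t hs ht hst
  simp only [Set.mem_ofPred_eq, Prod.fst_add, Prod.snd_add, Prod.smul_fst, Prod.smul_snd,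
    smul_eq_mul] at hp hq ⊢
  have habs : |s * p.1 + t * q.1| ≤ s * |p.1| + t * |q.1| := by
    simpa only [abs_mul, abs_of_nonneg hs, abs_of_nonneg ht] using abs_add_le (s * p.1) (t * q.1)
  calc α * |s * p.1 + t * q.1| + β * (s * p.2 + t * q.2)
      ≤ α * (s * |p.1| + t * |q.1|) + β * (s * p.2 + t * q.2) := by gcongr
    _ = s * (α * |p.1| + β * p.2) + t * (α * |q.1| + β * q.2) := by ring
    _ ≤ s * γ + t * γ := by gcongr
    _ = γ := by rw [← add_mul, hst, one_mul]

end Convex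

section Homothety

lemma mem_homothety_image_iff_s6 {𝕜 V P : Type*} [Field 𝕜] [AddCommGroup V] [Module 𝕜 V]
    [AddTorsor V P] {l : 𝕜} (hl : l ≠ 0) (o p : P) (S : Set P) :
    p ∈ AffineMap.homothety o l '' S ↔ AffineMap.homothety o l⁻¹ p ∈ S := by
  apply Set.mem_image_iff_of_inverse
  · intro q
    rw [← AffineMap.homothety_mul_apply, inv_mul_cancel₀ hl, AffineMap.homothety_one,
      AffineMap.id_apply]
  · intro q
    rw [← AffineMap.homothety_mul_apply, mul_inv_cancel₀ hl, AffineMap.homothety_one,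
      AffineMap.id_apply]

lemma mul_abs_add_mul_homothety_inv_le_iff {𝕜 : Type*} [Field 𝕜] [LinearOrder 𝕜]
    [IsStrictOrderedRing 𝕜] {l : 𝕜} (hl : 0 < l) (α β γ c x y : 𝕜) :
    α * |l⁻¹ * x| + β * (l⁻¹ * (y - c) + c) ≤ γ ↔ α * |x| + β * (y - c) ≤ l * (γ - β * c) := by
  rw [abs_mul, abs_of_pos (inv_pos.mpr hl), ← inv_mul_le_iff₀ hl, le_sub_iff_add_le]
  ring_nf

end Homothety

section Polygons

variable {a b c l x y : ℝ} {p : ℝ × ℝ}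

lemma mk_mem_L (ha : a ∈ Set.Icc (0 : ℝ) 1) (hlower : |x| - y ≤ 0) (hupper : |x| + y ≤ 4)
    (htop : y ≤ 3) (hbottom : (1 - a) * |x| - (1 + a) * y ≤ -2 * a) : (x, y) ∈ L a := by
  obtain ⟨ha₀, ha₁⟩ := ha
  have hconv : Convex ℝ (L a) := convex_convexHull ℝ _
  have hvertex := subset_convexHull ℝ ({((0 : ℝ), 2 * a / (1 + a)), (1, 1), (-1, 1), (2, 2),
    (-2, 2), (1, 3), (-1, 3)} : Set (ℝ × ℝ))
  rcases lt_or_ge y 1 with hy₁ | hy₁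
  · have hpos : 0 < 1 + a := by linarith
    have hwidth : 0 ≤ (1 - a) * |x| := mul_nonneg (sub_nonneg.mpr ha₁) (abs_nonneg x)
    refine mk_mem_of_convex_of_mem_trapezoid hconv (w₀ := 0) (y₀ := 2 * a / (1 + a)) (w₁ := 1)
      (y₁ := 1) (hvertex (by simp)) (hvertex (by simp)) (hvertex (by simp)) (hvertex (by simp))
      ?_ ?_ hy₁.le ?_
    · rw [div_lt_one hpos]
      linarith [mul_lt_of_lt_one_right hpos hy₁]
    · rw [div_le_iff₀ hpos]
      linarith
    · field_simp
      linarith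
  rcases le_total y 2 with hy₂ | hy₂
  · exact mk_mem_of_convex_of_mem_trapezoid hconv (w₀ := 1) (y₀ := 1) (w₁ := 2) (y₁ := 2)
      (hvertex (by simp)) (hvertex (by simp)) (hvertex (by simp)) (hvertex (by simp))
      one_lt_two hy₁ hy₂ (by linarith)
  · exact mk_mem_of_convex_of_mem_trapezoid hconv (w₀ := 2) (y₀ := 2) (w₁ := 1) (y₁ := 3)
      (hvertex (by simp)) (hvertex (by simp)) (hvertex (by simp)) (hvertex (by simp))
      (by norm_num) hy₂ htop (by linarith)

lemma mem_homothety_image_L (ha : a ∈ Set.Icc (0 : ℝ) 1) (hl : 0 < l)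
    (hlower : |p.1| - (p.2 - c) ≤ l * c) (hupper : |p.1| + (p.2 - c) ≤ l * (4 - c))
    (htop : p.2 - c ≤ l * (3 - c))
    (hbottom : (1 - a) * |p.1| - (1 + a) * (p.2 - c) ≤ l * ((1 + a) * c - 2 * a)) :
    p ∈ AffineMap.homothety ((0 : ℝ), c) l '' L a := by
  have hscale := fun α β γ ↦ mul_abs_add_mul_homothety_inv_le_iff hl α β γ c p.1 p.2
  have hinv : AffineMap.homothety ((0 : ℝ), c) l⁻¹ p = (l⁻¹ * p.1, l⁻¹ * (p.2 - c) + c) := by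
    ext <;> simp [AffineMap.homothety_apply]
  rw [mem_homothety_image_iff_s6 hl.ne', hinv]
  apply mk_mem_L ha
  · linarith [(hscale 1 (-1) 0).mpr (by linarith)]
  · linarith [(hscale 1 1 4).mpr (by linarith)]
  · linarith [(hscale 0 1 3).mpr (by linarith)]
  · linarith [(hscale (1 - a) (-(1 + a)) (-2 * a)).mpr (by linarith)]

lemma mul_abs_fst_add_mul_snd_le_of_mem_U {α β γ : ℝ} (hb : b ∈ Set.Ico (0 : ℝ) (1 / 2))
    (hα : 0 ≤ α) (h₁ : α * b + β * b ≤ γ) (h₂ : α * (2 + b) + β * (2 - b) ≤ γ)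
    (h₃ : α * (3 - b) + β * (3 - b) ≤ γ) (h₄ : α * (3 - 2 * b) + β * 3 ≤ γ)
    (h₅ : α * b + β * (4 - b) ≤ γ) (hp : p ∈ U b) : α * |p.1| + β * p.2 ≤ γ := by
  obtain ⟨hb₀, hb₁⟩ := hb
  rw [U, if_pos hb₁] at hp
  refine convexHull_min ?_ (convex_setOf_mul_abs_fst_add_mul_snd_le hα β γ) hp
  have e₁ : |b| = b := abs_of_nonneg hb₀
  have e₂ : |2 + b| = 2 + b := abs_of_nonneg (by linarith)
  have e₃ : |3 - b| = 3 - b := abs_of_nonneg (by linarith)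
  have e₄ : |3 - 2 * b| = 3 - 2 * b := abs_of_nonneg (by linarith)
  simp only [Set.insert_subset_iff, Set.singleton_subset_iff, Set.mem_ofPred_eq, abs_neg,
    e₁, e₂, e₃, e₄]
  exact ⟨h₁, h₁, h₂, h₂, h₃, h₃, h₄, h₄, h₅, h₅⟩

lemma abs_fst_sub_snd_le_of_mem_U (hb : b ∈ Set.Ico (0 : ℝ) (1 / 2)) (hp : p ∈ U b) :
    |p.1| - p.2 ≤ 2 * b := by
  have ⟨hb₀, _⟩ := hb
  have h := mul_abs_fst_add_mul_snd_le_of_mem_U (α := 1) (β := -1) (γ := 2 * b) hb zero_le_one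
    (by linarith) (by linarith) (by linarith) (by linarith) (by linarith) hp
  linarith

lemma abs_fst_add_snd_le_of_mem_U (hb : b ∈ Set.Ico (0 : ℝ) (1 / 2)) (hp : p ∈ U b) :
    |p.1| + p.2 ≤ 6 - 2 * b := by
  have ⟨_, hb₁⟩ := hb
  have h := mul_abs_fst_add_mul_snd_le_of_mem_U (α := 1) (β := 1) (γ := 6 - 2 * b) hb zero_le_one
    (by linarith) (by linarith) (by linarith) (by linarith) (by linarith) hp
  linarith

lemma snd_le_of_mem_U (hb : b ∈ Set.Ico (0 : ℝ) (1 / 2)) (hp : p ∈ U b) : p.2 ≤ 4 - b := by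
  have ⟨_, hb₁⟩ := hb
  have h := mul_abs_fst_add_mul_snd_le_of_mem_U (α := 0) (β := 1) (γ := 4 - b) hb le_rfl
    (by linarith) (by linarith) (by linarith) (by linarith) (by linarith) hp
  linarith

lemma mul_abs_fst_sub_mul_snd_le_of_mem_U (ha : a ∈ Set.Icc (0 : ℝ) 1)
    (hb : b ∈ Set.Ico (0 : ℝ) (1 / 2)) (hp : p ∈ U b) :
    (1 - a) * |p.1| - (1 + a) * p.2 ≤ max (-2 * a * b) (2 * b - 4 * a) := by
  have ⟨ha₀, ha₁⟩ := ha
  have ⟨hb₀, hb₁⟩ := hb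
  have hab : a * b ≤ a := mul_le_of_le_one_right ha₀ (by linarith)
  have hleft := le_max_left (-2 * a * b) (2 * b - 4 * a)
  have hright := le_max_right (-2 * a * b) (2 * b - 4 * a)
  have h := mul_abs_fst_add_mul_snd_le_of_mem_U (α := 1 - a) (β := -(1 + a)) hb
    (sub_nonneg.mpr ha₁) (by linarith) (by linarith) (by linarith) (by linarith) (by linarith) hp
  linarith

/- For the lower edges of `L a` through `(0, 2 * a / (1 + a))`, the vertices `(±(2 + b), 2 - b)`
of `U b` give the condition concluded here; it follows from the one these vertices give for the
edges on `|x| = y`, so it needs no term in the bound for the ratio. -/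
lemma two_mul_sub_two_mul_le_mul {m : ℝ} (ha : 0 ≤ a) (hc : 0 < c)
    (hca : 2 * a ≤ (1 + a) * c) (hcb : 2 * b ≤ (1 + b) * c) (hm : 2 * b ≤ m * c) :
    2 * b - 2 * a ≤ m * ((1 + a) * c - 2 * a) := by
  refine le_of_mul_le_mul_right ?_ hc
  calc (2 * b - 2 * a) * c
      ≤ (2 * b - 2 * a) * c + 2 * a * ((1 + b) * c - 2 * b) :=
        le_add_of_nonneg_right (mul_nonneg (by positivity) (sub_nonneg.mpr hcb))
    _ = 2 * b * ((1 + a) * c - 2 * a) := by ring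
    _ ≤ m * c * ((1 + a) * c - 2 * a) := mul_le_mul_of_nonneg_right hm (sub_nonneg.mpr hca)
    _ = m * ((1 + a) * c - 2 * a) * c := by ring

end Polygons

theorem stmt_6_general (a b c l : ℝ) (ha : a ∈ Set.Icc (0 : ℝ) 1)
    (hb : b ∈ Set.Ico (0 : ℝ) (1 / 2))
    (hc₁ : max (2 * a / (1 + a)) (2 * b / (1 + b)) < c) (hc₂ : c ≤ 2)
    (hl : l ≥ 1 + max (2 * a * (1 - b) / (c + c * a - 2 * a))
      (max (2 * b / c) (2 * (1 - b) / (4 - c)))) :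
    U b ⊆ AffineMap.homothety ((0 : ℝ), c) l '' L a := by
  have ⟨ha₀, _⟩ := ha
  have ⟨hb₀, _⟩ := hb
  obtain ⟨hca, hcb⟩ := max_lt_iff.mp hc₁
  have hc : 0 < c := lt_of_le_of_lt (by positivity) hca
  rw [div_lt_iff₀' (by positivity)] at hca hcb
  obtain ⟨hbottom, hlower, hupper⟩ := by
    simpa only [max_le_iff] using le_sub_iff_add_le'.mpr hl
  have hl₀ : 0 ≤ l - 1 := le_trans (by positivity) hlower
  rw [div_le_iff₀ (by linarith)] at hbottom hlower hupper
  have hside := two_mul_sub_two_mul_le_mul ha₀ hc hca.le hcb.le hlower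
  intro p hp
  apply mem_homothety_image_L ha (by linarith)
  · linarith [abs_fst_sub_snd_le_of_mem_U hb hp]
  · linarith [abs_fst_add_snd_le_of_mem_U hb hp]
  · have htop : 0 ≤ (l - 1) * (2 - c) := mul_nonneg hl₀ (sub_nonneg.mpr hc₂)
    linarith [snd_le_of_mem_U hb hp]
  · have hmax : max (-2 * a * b) (2 * b - 4 * a) ≤ (l - 1) * ((1 + a) * c - 2 * a) - 2 * a :=
      max_le (by linarith) (by linarith)
    linarith [mul_abs_fst_sub_mul_snd_le_of_mem_U ha hb hp]

theorem stmt_6 (a b c l : ℝ) (ha : a ∈ Set.Ico (0 : ℝ) (1 / 2))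
    (hb : b ∈ Set.Ico (0 : ℝ) (1 / 2))
    (hc₁ : max (2 * a / (1 + a)) (2 * b / (1 + b)) < c) (hc₂ : c < 2)
    (hl : l ≥ 1 + max (2 * a * (1 - b) / (c + c * a - 2 * a))
      (max (2 * b / c) (2 * (1 - b) / (4 - c)))) :
    U b ⊆ AffineMap.homothety ((0 : ℝ), c) l '' L a := by
  exact stmt_6_general a b c l (Set.Ico_subset_Icc_self.trans
    (Set.Icc_subset_Icc_right (by norm_num)) ha) hb hc₁ hc₂.le hl
end

section
/- Let K be a convex body in ℝ² whose boundary contains the six points (1,1), (−1,1), (2,2), (−2,2), (1,3), (−1,3) (the vertices of an affine-regular hexagon). Then the convex hull of these six points is contained in K, and K is contained in the hexagon with vertices (0,0), (3,1), (3,3), (0,4), (−3,3), (−3,1) (the hexagon formed by the pairwise intersections of the lines extending the sides of the inscribed hexagon). -/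
/-- A convex body in the plane: compact, convex, with nonempty interior. -/
def IsConvexBody (A : Set (ℝ × ℝ)) : Prop :=
  Convex ℝ A ∧ IsCompact A ∧ (interior A).Nonempty

/-!
If a point `p` of `K` lay strictly beyond the lines extending two adjacent sides of the inscribed
hexagon, the common vertex of these sides would be a positive combination of `p` and the two
neighbouring vertices, hence interior to `K`. So `K` is contained in the six-pointed star formed by
the extended sides, and the tips of this star span the outer hexagon. With the centre `c` and two
adjacent vertices `c + u`, `c + v` as an affine frame, the symmetries of the hexagon reduce
everything to the sector `x, y ≥ 0` of the points `c + (x • u + y • v)`.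
-/

open Submodule (span)

section Interior

variable {ι E : Type*} [Fintype ι] [Nonempty ι] [AddCommGroup E] [Module ℝ E] [TopologicalSpace E]
  [IsTopologicalAddGroup E] [ContinuousSMul ℝ E] [T2Space E]

theorem mem_interior_of_sum_smul_eq_zero {K : Set E} (hK : Convex ℝ K) {a : E} {s : ι → E}
    (hspan : span ℝ (Set.range s) = ⊤) (hs : ∀ i, a + s i ∈ K) {w : ι → ℝ} (hw : ∀ i, 0 < w i)
    (hsum : ∑ i, w i • s i = 0) : a ∈ interior K := by
  have hW : 0 < ∑ i, w i := Finset.sum_pos (fun i _ ↦ hw i) Finset.univ_nonempty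
  have hsurj : Function.Surjective (Fintype.linearCombination ℝ s) := by
    rw [← LinearMap.range_eq_top, Fintype.range_linearCombination, hspan]
  have : FiniteDimensional ℝ E := Module.Finite.of_surjective _ hsurj
  have hopen : IsOpenMap fun x ↦ a + Fintype.linearCombination ℝ s x :=
    (isOpenMap_add_left a).comp (LinearMap.isOpenMap_of_finiteDimensional _ hsurj)
  -- Adding a multiple of the relation `hsum` to the coefficients `x` makes them sum to `1`.
  let r (x : ι → ℝ) : ℝ := (1 - ∑ i, x i) / ∑ i, w i
  let U : Set (ι → ℝ) := {x | ∀ i, 0 < x i + r x * w i}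
  have hU : IsOpen U := by
    simp only [U, r, Set.ofPred_forall]
    exact isOpen_iInter_of_finite fun i ↦ isOpen_lt continuous_const (by fun_prop)
  refine mem_interior.2 ⟨_, ?_, hopen U hU, 0, ?_, by simp⟩
  · rintro _ ⟨x, hx, rfl⟩
    have hone : ∑ i, (x i + r x * w i) = 1 := by
      rw [Finset.sum_add_distrib, ← Finset.mul_sum, div_mul_cancel₀ _ hW.ne']
      ring
    have hcomb : ∑ i, (x i + r x * w i) • (a + s i) = a + Fintype.linearCombination ℝ s x := by
      simp only [smul_add, Finset.sum_add_distrib, ← Finset.sum_smul, hone, one_smul]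
      simp only [add_smul, mul_smul, Finset.sum_add_distrib, ← Finset.smul_sum, hsum, smul_zero,
        add_zero, Fintype.linearCombination_apply]
    exact Set.mem_of_eq_of_mem hcomb.symm (hK.sum_mem (fun i _ ↦ (hx i).le) hone fun i _ ↦ hs i)
  · intro i
    simpa [r] using mul_pos (inv_pos.2 hW) (hw i)

end Interior

section Hexagon

variable {E : Type*} [AddCommGroup E]

/-- The vertices of the affine-regular hexagon with centre `c` and adjacent vertices `c + u` and
`c + v`; the next vertex in cyclic order is `c + (v - u)`. -/
def hexagonVertices (c u v : E) : Set E :=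
  {c + u, c + v, c + (v - u), c - u, c - v, c - (v - u)}

/-- The tips of the six-pointed star obtained by extending the sides of the hexagon
`hexagonVertices c u v`. They form an affine-regular hexagon again, with adjacent vertices
`c + (u + v)` (beyond the side from `c + u` to `c + v`) and `c + (2 • v - u)` (beyond the next
side). -/
def starTips (c u v : E) : Set E :=
  hexagonVertices c (u + v) (2 • v - u)

theorem hexagonVertices_swap (c u v : E) : hexagonVertices c v u = hexagonVertices c u v := by
  ext p
  simp only [hexagonVertices, Set.mem_insert_iff, Set.mem_singleton_iff,
    show c + (u - v) = c - (v - u) by abel, show c - (u - v) = c + (v - u) by abel]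
  tauto

theorem hexagonVertices_rotate (c u v : E) :
    hexagonVertices c v (v - u) = hexagonVertices c u v := by
  ext p
  simp only [hexagonVertices, Set.mem_insert_iff, Set.mem_singleton_iff,
    show c + (v - u - v) = c - u by abel, show c - (v - u - v) = c + u by abel]
  tauto

theorem hexagonVertices_neg (c u v : E) :
    hexagonVertices c (-u) (-v) = hexagonVertices c u v := by
  rw [← hexagonVertices_rotate c u, ← hexagonVertices_rotate c v,
    ← hexagonVertices_rotate c (v - u)]
  congr 1 <;> abel

theorem starTips_rotate (c u v : E) : starTips c v (v - u) = starTips c u v := by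
  rw [starTips, starTips, ← hexagonVertices_rotate c (u + v)]
  congr 1 <;> abel

theorem starTips_swap (c u v : E) : starTips c v u = starTips c u v := by
  rw [starTips, starTips, ← hexagonVertices_swap c (u + v),
    ← hexagonVertices_rotate c (2 • v - u)]
  congr 1 <;> abel

theorem starTips_neg (c u v : E) : starTips c (-u) (-v) = starTips c u v := by
  rw [starTips, starTips, ← hexagonVertices_neg c (u + v)]
  congr 1 <;> abel

variable [Module ℝ E]

theorem add_smul_mem_convexHull_starTips (c u v : E) {x y : ℝ} (hx : 0 ≤ x) (hy : 0 ≤ y)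
    (hx1 : x ≤ 1) (hy1 : y ≤ 1) : c + (x • u + y • v) ∈ convexHull ℝ (starTips c u v) := by
  wlog hyx : y ≤ x generalizing u v x y
  · rw [add_comm (x • u), ← starTips_swap]
    exact this v u hy hx hy1 hx1 (le_of_not_ge hyx)
  -- The sector `0 ≤ y ≤ x` lies between the tips `c + (u + v)` and `c + (2 • u - v)`;
  -- the centre is the midpoint of the tips `c ± (u + v)`.
  let tips : Fin 3 → E := ![c + (u + v), c - (2 • v - u - (u + v)), c - (u + v)]
  let w : Fin 3 → ℝ := ![1 / 2 + y / 2, (x - y) / 3, 1 / 2 - x / 3 - y / 6]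
  have htips : ∀ i, tips i ∈ starTips c u v := by
    simp [Fin.forall_fin_succ, tips, starTips, hexagonVertices]
  have hw : ∀ i, 0 ≤ w i := by
    rw [Fin.forall_fin_succ, Fin.forall_fin_two]
    refine ⟨?_, ?_, ?_⟩ <;> dsimp [w] <;> linarith
  have hone : ∑ i, w i = 1 := by
    simp only [w, Fin.sum_univ_three, Matrix.cons_val]
    ring
  have hcomb : ∑ i, w i • tips i = c + (x • u + y • v) := by
    simp only [w, tips, Fin.sum_univ_three, Matrix.cons_val]
    module
  exact hcomb ▸ (convex_convexHull ℝ _).sum_mem (fun i _ ↦ hw i) hone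
    fun i _ ↦ subset_convexHull ℝ _ (htips i)

theorem span_pair_rotate (u v : E) : span ℝ {v, v - u} = span ℝ {u, v} := by
  have hu : u ∈ span ℝ {u, v} := Submodule.subset_span (by simp)
  have hv : v ∈ span ℝ {u, v} := Submodule.subset_span (by simp)
  have hv' : v ∈ span ℝ {v, v - u} := Submodule.subset_span (by simp)
  have hvu : v - u ∈ span ℝ {v, v - u} := Submodule.subset_span (by simp)
  refine le_antisymm (Submodule.span_le.2 (Set.pair_subset hv (sub_mem hv hu)))
    (Submodule.span_le.2 (Set.pair_subset ?_ hv'))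
  simpa only [SetLike.mem_coe, sub_sub_cancel] using sub_mem hv' hvu

variable [TopologicalSpace E] [IsTopologicalAddGroup E] [ContinuousSMul ℝ E] [T2Space E]
  {K : Set E} {c u v : E} {x y : ℝ}

theorem vertex_mem_interior (hK : Convex ℝ K) (hspan : span ℝ {u, v} = ⊤)
    (hu : c + u ∈ K) (hvu : c + (v - u) ∈ K) (hp : c + (x • u + y • v) ∈ K)
    (hy : 1 < y) (hxy : 1 < x + y) : c + v ∈ interior K := by
  let s : Fin 3 → E := ![x • u + (y - 1) • v, u - v, -u]
  let w : Fin 3 → ℝ := ![1, y - 1, x + y - 1]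
  have hs : ∀ i, c + v + s i ∈ K := by
    rw [Fin.forall_fin_succ, Fin.forall_fin_two]
    refine ⟨Set.mem_of_eq_of_mem ?_ hp, Set.mem_of_eq_of_mem ?_ hu, Set.mem_of_eq_of_mem ?_ hvu⟩ <;>
      dsimp [s] <;> module
  have hw : ∀ i, 0 < w i := by
    simp [Fin.forall_fin_succ, w, hy, hxy]
  have hsum : ∑ i, w i • s i = 0 := by
    simp only [w, s, Fin.sum_univ_three, Matrix.cons_val]
    module
  have hspan_s : span ℝ (Set.range s) = ⊤ := by
    have hu' : -u ∈ span ℝ (Set.range s) := Submodule.subset_span ⟨2, rfl⟩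
    have huv : u - v ∈ span ℝ (Set.range s) := Submodule.subset_span ⟨1, rfl⟩
    refine top_le_iff.1 (hspan ▸ Submodule.span_le.2 (Set.pair_subset (neg_mem_iff.1 hu') ?_))
    simpa only [SetLike.mem_coe, sub_sub_cancel] using sub_mem (neg_mem_iff.1 hu') huv
  exact mem_interior_of_sum_smul_eq_zero hK hspan_s hs hw hsum

variable (hK : Convex ℝ K) (hclosed : IsClosed K) (hspan : span ℝ {u, v} = ⊤)
  (hbd : hexagonVertices c u v ⊆ frontier K) (hp : c + (x • u + y • v) ∈ K)
include hK hclosed hspan hbd hp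

theorem coord_le_one_of_vertices_subset_frontier (hx : 0 ≤ x) : y ≤ 1 := by
  by_contra! hy
  have hmem := hbd.trans hclosed.frontier_subset
  exact (hbd (by simp [hexagonVertices])).2 <| vertex_mem_interior hK hspan
    (hmem (by simp [hexagonVertices])) (hmem (by simp [hexagonVertices])) hp hy (by linarith)

theorem mem_convexHull_starTips_of_nonneg (hx : 0 ≤ x) (hy : 0 ≤ y) :
    c + (x • u + y • v) ∈ convexHull ℝ (starTips c u v) := by
  have hy1 : y ≤ 1 := coord_le_one_of_vertices_subset_frontier hK hclosed hspan hbd hp hx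
  have hx1 : x ≤ 1 := by
    rw [← hexagonVertices_swap] at hbd
    rw [Set.pair_comm] at hspan
    rw [add_comm (x • u)] at hp
    exact coord_le_one_of_vertices_subset_frontier hK hclosed hspan hbd hp hy
  exact add_smul_mem_convexHull_starTips c u v hx hy hx1 hy1

theorem mem_convexHull_starTips_of_mem :
    c + (x • u + y • v) ∈ convexHull ℝ (starTips c u v) := by
  wlog hy : 0 ≤ y generalizing u v x y
  · rw [show x • u + y • v = (-x) • (-u) + (-y) • (-v) by module] at hp ⊢
    rw [← hexagonVertices_neg] at hbd
    rw [← Submodule.span_neg, Set.neg_insert, Set.neg_singleton] at hspan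
    rw [← starTips_neg]
    exact this hspan hbd hp (by linarith)
  wlog hxy : 0 ≤ x + y generalizing u v x y
  · have hx : 0 ≤ -x := by linarith
    rw [show x • u + y • v = (x + y) • v + (-x) • (v - u) by module] at hp ⊢
    rw [← hexagonVertices_rotate] at hbd
    rw [← span_pair_rotate] at hspan
    rw [← starTips_rotate]
    exact this hspan hbd hp hx (by linarith)
  wlog hx : 0 ≤ x generalizing u v x y
  · have hx' : 0 ≤ -x := by linarith
    rw [show x • u + y • v = (x + y) • v + (-x) • (v - u) by module] at hp ⊢
    rw [← hexagonVertices_rotate] at hbd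
    rw [← span_pair_rotate] at hspan
    rw [← starTips_rotate]
    exact mem_convexHull_starTips_of_nonneg hK hclosed hspan hbd hp hxy hx'
  exact mem_convexHull_starTips_of_nonneg hK hclosed hspan hbd hp hx hy

end Hexagon

theorem stmt_7_general {E : Type*} [AddCommGroup E] [Module ℝ E] [TopologicalSpace E]
    [IsTopologicalAddGroup E] [ContinuousSMul ℝ E] [T2Space E] {K : Set E} (hK : Convex ℝ K)
    (hclosed : IsClosed K) {c u v : E} (hspan : span ℝ {u, v} = ⊤)
    (hbd : hexagonVertices c u v ⊆ frontier K) :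
    convexHull ℝ (hexagonVertices c u v) ⊆ K ∧ K ⊆ convexHull ℝ (starTips c u v) := by
  refine ⟨convexHull_min (hbd.trans hclosed.frontier_subset) hK, fun p hp ↦ ?_⟩
  have hpc : p - c ∈ span ℝ {u, v} := hspan ▸ Submodule.mem_top
  obtain ⟨x, y, hxy⟩ := Submodule.mem_span_pair.1 hpc
  obtain rfl : p = c + (x • u + y • v) := by rw [hxy, add_sub_cancel]
  exact mem_convexHull_starTips_of_mem hK hclosed hspan hbd hp

theorem hexagonVertices_eq_inscribed :
    hexagonVertices ((0 : ℝ), (2 : ℝ)) (2, 0) (1, 1) =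
      {(1, 1), (-1, 1), (2, 2), (-2, 2), (1, 3), (-1, 3)} := by
  ext p
  norm_num [hexagonVertices]
  tauto

theorem starTips_eq_circumscribed :
    starTips ((0 : ℝ), (2 : ℝ)) (2, 0) (1, 1) =
      {(0, 0), (3, 1), (3, 3), (0, 4), (-3, 3), (-3, 1)} := by
  ext p
  norm_num [starTips, hexagonVertices]
  tauto

theorem span_two_zero_one_one : span ℝ {((2 : ℝ), (0 : ℝ)), (1, 1)} = ⊤ := by
  refine Submodule.eq_top_iff'.2 fun p ↦ Submodule.mem_span_pair.2 ⟨(p.1 - p.2) / 2, p.2, ?_⟩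
  ext <;> simp

theorem stmt_7 (K : Set (ℝ × ℝ)) (hK : IsConvexBody K)
    (hbd : ({((1 : ℝ), (1 : ℝ)), (-1, 1), (2, 2), (-2, 2), (1, 3), (-1, 3)} : Set (ℝ × ℝ))
      ⊆ frontier K) :
    convexHull ℝ ({((1 : ℝ), (1 : ℝ)), (-1, 1), (2, 2), (-2, 2), (1, 3), (-1, 3)} : Set (ℝ × ℝ))
      ⊆ K ∧
    K ⊆ convexHull ℝ
      ({((0 : ℝ), (0 : ℝ)), (3, 1), (3, 3), (0, 4), (-3, 3), (-3, 1)} : Set (ℝ × ℝ)) := by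
  rw [← hexagonVertices_eq_inscribed] at hbd ⊢
  exact starTips_eq_circumscribed ▸
    stmt_7_general hK.1 hK.2.1.isClosed span_two_zero_one_one hbd
end

section
/- Let H be the hexagon in ℝ² with vertices (0, 4/3), (1, 5/3), (−1, 5/3), (1, 7/3), (−1, 7/3), (0, 8/3). For every a ∈ [0,1], U_a is contained in the homothety of H with center (0,2) and ratio 3 − a. -/
/-- The hexagon H with vertices (0,4/3), (±1,5/3), (±1,7/3), (0,8/3). -/
noncomputable def hexH : Set (ℝ × ℝ) :=
  convexHull ℝ {((0 : ℝ), (4 / 3 : ℝ)), (1, 5 / 3), (-1, 5 / 3), (1, 7 / 3), (-1, 7 / 3),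
    (0, 8 / 3)}

/-!
The hexagon `hexH` is the region `|x| ≤ 1`, `3 * |y - 2| + |x| ≤ 2`, so its dilate by `r > 0` about
`(0, 2)` contains the rectangle `|x| ≤ u`, `|y - 2| ≤ v` as soon as `u ≤ r` and `3 * v + u ≤ 2 * r`.
The vertices of `U a` lie at the corners of such rectangles, with `(u, v)` one of `(a, 2 - a)`,
`(3 - 2 * a, 1)`, `(3 - a, |1 - a|)` and, for `a < 1 / 2`, `(2 + a, a)`.
For `r = 3 - a` the constraints on the first three hold up to `a = 3 / 2`.
-/

section Convex

variable {𝕜 E : Type*} [Field 𝕜] [LinearOrder 𝕜] [IsStrictOrderedRing 𝕜]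
  [AddCommGroup E] [Module 𝕜 E]

theorem mk_lineMap_abs_mem {s : Set (𝕜 × E)} (hs : Convex 𝕜 s) {p q : E}
    (h_apex : (0, p) ∈ s) (h_right : (1, q) ∈ s) (h_left : (-1, q) ∈ s) {x : 𝕜} (hx : |x| ≤ 1) :
    (x, AffineMap.lineMap p q |x|) ∈ s := by
  have hx' : |x| ∈ Set.Icc 0 1 := ⟨abs_nonneg x, hx⟩
  rcases abs_choice x with h | h
  · convert hs.lineMap_mem h_apex h_right hx' using 1
    ext <;> simp [AffineMap.lineMap_apply, h]
  · convert hs.lineMap_mem h_apex h_left hx' using 1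
    ext <;> simp [AffineMap.lineMap_apply, h]

theorem mk_mem_of_mem_Icc {s : Set (E × 𝕜)} (hs : Convex 𝕜 s) {x : E} {y₁ y₂ y : 𝕜}
    (h₁ : (x, y₁) ∈ s) (h₂ : (x, y₂) ∈ s) (hy : y ∈ Set.Icc y₁ y₂) : (x, y) ∈ s := by
  apply hs.segment_subset h₁ h₂
  rw [← Prod.image_mk_segment_right]
  exact Set.mem_image_of_mem _ (Icc_subset_segment hy)

end Convex

theorem mk_mem_hexH {x y : ℝ} (hx : |x| ≤ 1) (hxy : 3 * |y - 2| + |x| ≤ 2) : (x, y) ∈ hexH := by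
  have hconv : Convex ℝ hexH := convex_convexHull ℝ _
  have lower : (x, AffineMap.lineMap (4 / 3 : ℝ) (5 / 3) |x|) ∈ hexH := by
    apply mk_lineMap_abs_mem hconv _ _ _ hx <;> exact subset_convexHull ℝ _ (by simp)
  have upper : (x, AffineMap.lineMap (8 / 3 : ℝ) (7 / 3) |x|) ∈ hexH := by
    apply mk_lineMap_abs_mem hconv _ _ _ hx <;> exact subset_convexHull ℝ _ (by simp)
  refine mk_mem_of_mem_Icc hconv lower upper ?_
  have hy : |y - 2| ≤ (2 - |x|) / 3 := by linarith
  obtain ⟨hy_lower, hy_upper⟩ := abs_le.1 hy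
  rw [AffineMap.lineMap_apply_ring', AffineMap.lineMap_apply_ring']
  constructor <;> linarith

theorem Icc_subset_homothety_image_hexH {r u v : ℝ} (hr : 0 < r) (hu : u ≤ r)
    (huv : 3 * v + u ≤ 2 * r) :
    Set.Icc (-u, 2 - v) (u, 2 + v) ⊆ AffineMap.homothety ((0 : ℝ), (2 : ℝ)) r '' hexH := by
  rintro ⟨x, y⟩ ⟨⟨hx_lower, hy_lower⟩, ⟨hx_upper, hy_upper⟩⟩
  dsimp only at hx_lower hy_lower hx_upper hy_upper
  have hx : |x| ≤ u := abs_le.2 ⟨hx_lower, hx_upper⟩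
  have hy : |y - 2| ≤ v := abs_le.2 ⟨by linarith, by linarith⟩
  have hmem : (x / r, (y - 2) / r + 2) ∈ hexH := by
    apply mk_mem_hexH
    · rw [abs_div, abs_of_pos hr, div_le_one hr]
      exact hx.trans hu
    · rw [add_sub_cancel_right, abs_div, abs_div, abs_of_pos hr, ← mul_div_assoc, ← add_div,
        div_le_iff₀ hr]
      linarith
  refine ⟨_, hmem, (AffineMap.homothety_eq_iff_of_mul_eq_one (mul_inv_cancel₀ hr.ne')).2 ?_⟩
  simp [AffineMap.homothety_apply, div_eq_inv_mul]

theorem stmt_8_general (a : ℝ) (ha : a ∈ Set.Icc (0 : ℝ) (3 / 2)) :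
    U a ⊆ AffineMap.homothety ((0 : ℝ), (2 : ℝ)) (3 - a) '' hexH := by
  obtain ⟨ha_nonneg, ha_le⟩ := ha
  have hconv : Convex ℝ (AffineMap.homothety ((0 : ℝ), (2 : ℝ)) (3 - a) '' hexH) :=
    (convex_convexHull ℝ _).affine_image _
  have hr : 0 < 3 - a := by linarith
  have h_abs : 3 * |1 - a| ≤ 3 - a := by
    cases abs_cases (1 - a) <;> linarith
  have h_le_abs := le_abs_self (1 - a)
  have h_neg_abs_le := neg_abs_le (1 - a)
  have tall := Icc_subset_homothety_image_hexH (u := a) (v := 2 - a) hr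
    (by linarith) (by linarith)
  have middle := Icc_subset_homothety_image_hexH (u := 3 - 2 * a) (v := 1) hr
    (by linarith) (by linarith)
  have wide := Icc_subset_homothety_image_hexH (u := 3 - a) (v := |1 - a|) hr
    le_rfl (by linarith)
  unfold U
  split_ifs with ha_half <;> refine convexHull_min ?_ hconv <;>
    simp only [Set.insert_subset_iff, Set.singleton_subset_iff]
  · have low := Icc_subset_homothety_image_hexH (u := 2 + a) (v := a) hr
      (by linarith) (by linarith)
    refine ⟨tall ?_, tall ?_, low ?_, low ?_, wide ?_, wide ?_, middle ?_, middle ?_,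
      tall ?_, tall ?_⟩ <;>
    constructor <;> constructor <;> dsimp only <;> linarith
  · refine ⟨tall ?_, tall ?_, middle ?_, middle ?_, wide ?_, wide ?_, wide ?_, wide ?_,
      middle ?_, middle ?_, tall ?_, tall ?_⟩ <;>
    constructor <;> constructor <;> dsimp only <;> linarith

theorem stmt_8 (a : ℝ) (ha : a ∈ Set.Icc (0 : ℝ) 1) :
    U a ⊆ AffineMap.homothety ((0 : ℝ), (2 : ℝ)) (3 - a) '' hexH :=
  stmt_8_general a ⟨ha.1, ha.2.trans (by norm_num)⟩
end

section
/- Let a, b ∈ [0,1/2) satisfy b ≤ 3a/(2(1+2a)) and a ≤ 3b/(2(1+2b)). Then (1 + (1−b)(1+2a)/(2+a)) · (1 + (1−a)(1+2b)/(2+b)) ≤ ((289 − 60√3)/121)² < 2.35. -/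
/-!
The factor `1 + (1 - a)(1 + 2b) / (2 + b)` increases with `b`, so the first upper bound bounds it by
its value on the curve `b = 3a / (2(1 + 2a))`; the other factor is symmetric. In terms of
`u = 4 + 11a` that value is `1 + (168 - 10 (u + 27 / u)) / 121`, and `u + 27 / u ≥ 6√3` by AM-GM.
-/

/-- The branch of the paper's piecewise function `λ(a, b)` valid for `b` up to `branchThreshold a`
(above that, `λ(a, b) = 3/2`), here as a formula for all real `a` and `b`. The two factors of the
product to be bounded are `lambdaBranch a b` and `lambdaBranch b a`. -/
noncomputable def lambdaBranch (a b : ℝ) : ℝ :=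
  1 + (1 - b) * (1 + 2 * a) / (2 + a)

/-- For `a ∈ [0, 1/2)`, the largest `b` for which `λ(a, b)` is given by `lambdaBranch a b`. -/
noncomputable def branchThreshold (a : ℝ) : ℝ :=
  3 * a / (2 * (1 + 2 * a))

theorem lambdaBranch_le_lambdaBranch_left {a a' b : ℝ} (ha : -2 < a) (haa' : a ≤ a')
    (hb : b ≤ 1) : lambdaBranch a b ≤ lambdaBranch a' b := by
  have hratio : (1 + 2 * a) / (2 + a) ≤ (1 + 2 * a') / (2 + a') := by
    rw [div_le_div_iff₀ (by linarith) (by linarith)]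
    linarith
  simp only [lambdaBranch, mul_div_assoc]
  gcongr

theorem one_le_lambdaBranch {a b : ℝ} (ha : -(1 / 2) ≤ a) (hb : b ≤ 1) :
    1 ≤ lambdaBranch a b :=
  le_add_of_nonneg_right <|
    div_nonneg (mul_nonneg (by linarith) (by linarith)) (by linarith)

theorem two_add_branchThreshold {a : ℝ} (ha : 1 + 2 * a ≠ 0) :
    2 + branchThreshold a = (4 + 11 * a) / (2 * (1 + 2 * a)) := by
  rw [branchThreshold]
  field_simp
  ring

theorem lambdaBranch_branchThreshold {a : ℝ} (ha : 1 + 2 * a ≠ 0) :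
    lambdaBranch (branchThreshold a) a = 1 + 2 * (1 - a) * (1 + 5 * a) / (4 + 11 * a) := by
  have hnum : 1 + 2 * branchThreshold a = 2 * (1 + 5 * a) / (2 * (1 + 2 * a)) := by
    rw [branchThreshold]
    field_simp
    ring
  rw [lambdaBranch, two_add_branchThreshold ha, hnum, mul_div_assoc,
    div_div_div_cancel_right₀ (mul_ne_zero two_ne_zero ha)]
  ring

theorem six_mul_sqrt_three_le_add_div {u : ℝ} (hu : 0 < u) : 6 * √3 ≤ u + 27 / u := by
  have hsq : u + 27 / u - 6 * √3 = (u - 3 * √3) ^ 2 / u := by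
    field_simp
    linear_combination -9 * Real.sq_sqrt (zero_le_three (α := ℝ))
  have hnonneg : 0 ≤ (u - 3 * √3) ^ 2 / u := by positivity
  linarith

theorem lambdaBranch_branchThreshold_le {a : ℝ} (ha : -(4 / 11) < a) :
    lambdaBranch (branchThreshold a) a ≤ (289 - 60 * √3) / 121 := by
  have hu : 0 < 4 + 11 * a := by linarith
  have hquot : 2 * (1 - a) * (1 + 5 * a) / (4 + 11 * a) =
      (168 - 10 * (4 + 11 * a + 27 / (4 + 11 * a))) / 121 := by
    rw [div_eq_iff hu.ne']
    linear_combination 10 / 121 * div_mul_cancel₀ 27 hu.ne'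
  calc lambdaBranch (branchThreshold a) a
      = 1 + 2 * (1 - a) * (1 + 5 * a) / (4 + 11 * a) :=
        lambdaBranch_branchThreshold (by linarith)
    _ = 1 + (168 - 10 * (4 + 11 * a + 27 / (4 + 11 * a))) / 121 := by rw [hquot]
    _ ≤ (289 - 60 * √3) / 121 := by
        linarith [six_mul_sqrt_three_le_add_div hu]

theorem lambdaBranch_le_of_le_branchThreshold {a b : ℝ} (ha : -(1 / 2) < a) (ha' : a ≤ 1)
    (hb : -2 < b) (hba : b ≤ branchThreshold a) :
    lambdaBranch b a ≤ (289 - 60 * √3) / 121 := by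
  have hden : 0 < 1 + 2 * a := by linarith
  have hu : 0 < 4 + 11 * a := by
    have hpos : 0 < 2 + branchThreshold a := by linarith
    rw [two_add_branchThreshold hden.ne'] at hpos
    exact (div_pos_iff_of_pos_right (by positivity)).mp hpos
  exact (lambdaBranch_le_lambdaBranch_left hb hba ha').trans
    (lambdaBranch_branchThreshold_le (by linarith))

theorem sq_289_sub_60_mul_sqrt_three_div_121_lt :
    ((289 - 60 * √3) / 121) ^ 2 < 2.35 := by
  have hlower : 1.73 < √3 := Real.lt_sqrt_of_sq_lt (by norm_num)
  have hupper : √3 < 2 := (Real.sqrt_lt' two_pos).mpr (by norm_num)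
  calc ((289 - 60 * √3) / 121) ^ 2
      < ((289 - 60 * 1.73) / 121) ^ 2 := by
        gcongr
        linarith
    _ < 2.35 := by norm_num

theorem stmt_13 (a b : ℝ) (ha : a ∈ Set.Ico (0 : ℝ) (1 / 2)) (hb : b ∈ Set.Ico (0 : ℝ) (1 / 2))
    (h₁ : b ≤ 3 * a / (2 * (1 + 2 * a))) (h₂ : a ≤ 3 * b / (2 * (1 + 2 * b))) :
    (1 + (1 - b) * (1 + 2 * a) / (2 + a)) * (1 + (1 - a) * (1 + 2 * b) / (2 + b))
      ≤ ((289 - 60 * Real.sqrt 3) / 121) ^ 2 ∧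
    ((289 - 60 * Real.sqrt 3) / 121) ^ 2 < 2.35 := by
  obtain ⟨ha₀, ha₁⟩ := ha
  obtain ⟨hb₀, hb₁⟩ := hb
  have hab : lambdaBranch a b ≤ (289 - 60 * √3) / 121 :=
    lambdaBranch_le_of_le_branchThreshold (by linarith) (by linarith) (by linarith) h₂
  have hba : lambdaBranch b a ≤ (289 - 60 * √3) / 121 :=
    lambdaBranch_le_of_le_branchThreshold (by linarith) (by linarith) (by linarith) h₁
  have hone : 1 ≤ lambdaBranch b a := one_le_lambdaBranch (by linarith) (by linarith)
  refine ⟨?_, sq_289_sub_60_mul_sqrt_three_div_121_lt⟩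
  rw [sq]
  exact mul_le_mul hab hba (zero_le_one.trans hone) (by linarith)
end

section
/- Let α ∈ (0,1/2) and let a, b ∈ [0,α] satisfy b ≤ 3a/(2(1+2a)) and a > 3b/(2(1+2b)). Then λ(a,b)·λ(b,a) = (3/2)·(1 + (1−b)(1+2a)/(2+a)) ≤ 9(1+α)/(2(2+α)). -/
theorem monotoneOn_mul_add_div_mul_add {K : Type*} [Field K] [LinearOrder K]
    [IsStrictOrderedRing K] {p q r s : K} (hdet : 0 ≤ p * s - q * r) :
    MonotoneOn (fun x ↦ (p * x + q) / (r * x + s)) {x | 0 < r * x + s} := by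
  intro x hx y hy hxy
  have cross_sub : (p * y + q) * (r * x + s) - (p * x + q) * (r * y + s) =
      (p * s - q * r) * (y - x) := by ring
  rw [div_le_div_iff₀ hx hy, ← sub_nonneg, cross_sub]
  exact mul_nonneg hdet (sub_nonneg.2 hxy)

section lam

variable {a b : ℝ}

theorem lam_of_le (h : b ≤ 3 * a / (2 * (1 + 2 * a))) :
    lam a b = 1 + (1 - b) * (1 + 2 * a) / (2 + a) :=
  if_pos h

theorem lam_of_lt (h : 3 * a / (2 * (1 + 2 * a)) < b) : lam a b = 3 / 2 :=
  if_neg h.not_ge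

theorem lam_le (ha : 0 ≤ a) (hb : 0 ≤ b) : lam a b ≤ (3 * a + 3) / (a + 2) := by
  rcases le_or_gt b (3 * a / (2 * (1 + 2 * a))) with h | h
  · calc
      lam a b = 1 + (1 - b) * (1 + 2 * a) / (2 + a) := lam_of_le h
      _ ≤ 1 + (1 + 2 * a) / (2 + a) := by
        gcongr
        exact mul_le_of_le_one_left (by positivity) (sub_le_self 1 hb)
      _ = (3 * a + 3) / (a + 2) := by
        field_simp
        ring
  · rw [lam_of_lt h, div_le_div_iff₀ two_pos (by positivity)]
    linarith

end lam

theorem stmt_14_general {α a b : ℝ} (hb : 0 ≤ b) (haα : a ≤ α)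
    (h₁ : b ≤ 3 * a / (2 * (1 + 2 * a))) (h₂ : 3 * b / (2 * (1 + 2 * b)) < a) :
    lam a b * lam b a = 3 / 2 * (1 + (1 - b) * (1 + 2 * a) / (2 + a)) ∧
    lam a b * lam b a ≤ 9 * (1 + α) / (2 * (2 + α)) := by
  have ha : 0 < a := lt_of_le_of_lt (by positivity) h₂
  have hα : 0 < α := ha.trans_le haα
  have bound_mono : (3 * a + 3) / (a + 2) ≤ (3 * α + 3) / (α + 2) := by
    simpa only [one_mul] using monotoneOn_mul_add_div_mul_add (p := 3) (q := 3) (r := 1) (s := 2)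
      (by norm_num) (show 0 < 1 * a + 2 by positivity) (show 0 < 1 * α + 2 by positivity) haα
  rw [lam_of_lt h₂]
  refine ⟨by rw [lam_of_le h₁, mul_comm], ?_⟩
  calc
    lam a b * (3 / 2) ≤ (3 * α + 3) / (α + 2) * (3 / 2) := by
      gcongr
      exact (lam_le ha.le hb).trans bound_mono
    _ = 9 * (1 + α) / (2 * (2 + α)) := by
      field_simp
      ring

theorem stmt_14 (α a b : ℝ) (hα : α ∈ Set.Ioo (0 : ℝ) (1 / 2))
    (ha : a ∈ Set.Icc (0 : ℝ) α) (hb : b ∈ Set.Icc (0 : ℝ) α)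
    (h₁ : b ≤ 3 * a / (2 * (1 + 2 * a))) (h₂ : a > 3 * b / (2 * (1 + 2 * b))) :
    lam a b * lam b a = 3 / 2 * (1 + (1 - b) * (1 + 2 * a) / (2 + a)) ∧
    lam a b * lam b a ≤ 9 * (1 + α) / (2 * (2 + α)) :=
  stmt_14_general hb.1 ha.2 h₁ h₂
end
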